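/- Let (x̄, ȳ) ∈ gph Y for a set-valued map Y : ℝⁿ ⇉ ℝᵐ with closed values and f : ℝⁿ × ℝᵐ → ℝ. Suppose f is semidifferentiable at (x̄, ȳ), and Y is semidifferentiable at x̄ for ȳ and calm around (x̄, ȳ). Then there exists κ > 0 such that the value function V_τ(x) := max_{y' ∈ Y(x) ∩ 𝔹_{κ‖x−x̄‖}(ȳ)} f(x, y') is semidifferentiable (hence directionally differentiable) at x̄, and for every u ∈ ℝⁿ its directional derivative is V_τ'(x̄; u) = max_{h ∈ DY(x̄, ȳ)(u)} df(x̄, ȳ)(u, h), the maximum being attained. -/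

import Mathlib

open Filter Topology Set Metric Classical
open scoped RealInnerProductSpace

noncomputable section

/-- Euclidean space ℝ^n. -/
abbrev Eu (n : ℕ) := EuclideanSpace ℝ (Fin n)

/-- The filter describing `t ↓ 0, w' → w`. -/
def quotFilter {E : Type*} [TopologicalSpace E] (w : E) : Filter (ℝ × E) :=
  (𝓝[>] (0 : ℝ)) ×ˢ 𝓝 w

section Normed

variable {E F : Type*} [NormedAddCommGroup E] [NormedSpace ℝ E]
  [NormedAddCommGroup F] [NormedSpace ℝ F]

/-- Subderivative `dψ(z)(w) = liminf_{t↓0, w'→w} (ψ(z+tw')-ψ(z))/t`, in `EReal`. -/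
def dsub (ψ : E → ℝ) (z w : E) : EReal :=
  liminf (fun p : ℝ × E => (((ψ (z + p.1 • p.2) - ψ z) / p.1 : ℝ) : EReal)) (quotFilter w)

/-- Superderivative `d⁺ψ(z)(w) = limsup_{t↓0, w'→w} (ψ(z+tw')-ψ(z))/t`, in `EReal`. -/
def dsup (ψ : E → ℝ) (z w : E) : EReal :=
  limsup (fun p : ℝ × E => (((ψ (z + p.1 • p.2) - ψ z) / p.1 : ℝ) : EReal)) (quotFilter w)

/-- `ψ` is semidifferentiable at `z`: for every `w` the limit of the difference
quotients exists (as a real number). -/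
def SemidiffAt (ψ : E → ℝ) (z : E) : Prop :=
  ∀ w, ∃ L : ℝ,
    Tendsto (fun p : ℝ × E => (ψ (z + p.1 • p.2) - ψ z) / p.1) (quotFilter w) (𝓝 L)

/-- Second subderivative `d²ψ(z)(w)` (without mention of a vector), in `EReal`. -/
def d2sub (ψ : E → ℝ) (z w : E) : EReal :=
  liminf (fun p : ℝ × E =>
      (((ψ (z + p.1 • p.2) - ψ z - p.1 * (dsub ψ z p.2).toReal) / (p.1 ^ 2 / 2) : ℝ) : EReal))
    (quotFilter w)

/-- `ψ` is twice semidifferentiable at `z`. -/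
def TwiceSemidiffAt (ψ : E → ℝ) (z : E) : Prop :=
  SemidiffAt ψ z ∧ ∀ w, ∃ Q : ℝ,
    Tendsto (fun p : ℝ × E =>
        (ψ (z + p.1 • p.2) - ψ z - p.1 * (dsub ψ z p.2).toReal) / (p.1 ^ 2 / 2))
      (quotFilter w) (𝓝 Q)

/-- Second subderivative of the indicator function `δ_S` at `z` for the
(pre-)derivative function `d` and direction `w`:
`liminf_{t↓0, w'→w} (δ_S(z+tw') - t d(w'))/(t²/2)`. -/
def d2IndSub (S : Set E) (d : E → ℝ) (z w : E) : EReal :=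
  liminf (fun p : ℝ × E =>
      if z + p.1 • p.2 ∈ S then (((-(p.1 * d p.2)) / (p.1 ^ 2 / 2) : ℝ) : EReal)
      else (⊤ : EReal))
    (quotFilter w)

/-- Tangent (contingent) cone via sequences. -/
def tCone (S : Set E) (z : E) : Set E :=
  {w | ∃ (t : ℕ → ℝ) (w' : ℕ → E), (∀ k, 0 < t k) ∧ Tendsto t atTop (𝓝 0) ∧
    Tendsto w' atTop (𝓝 w) ∧ ∀ k, z + t k • w' k ∈ S}

/-- Inner tangent cone via sequences. -/
def innerTCone (S : Set E) (z : E) : Set E :=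
  {w | ∀ t : ℕ → ℝ, (∀ k, 0 < t k) → Tendsto t atTop (𝓝 0) →
    ∃ w' : ℕ → E, Tendsto w' atTop (𝓝 w) ∧ ∀ k, z + t k • w' k ∈ S}

/-- A set is geometrically derivable if tangent and inner tangent cones coincide
at every point of the set. -/
def GeomDerivable (S : Set E) : Prop := ∀ z ∈ S, tCone S z = innerTCone S z

/-- Graphical derivative (Painlevé–Kuratowski outer limit of difference quotients). -/
def graphDeriv (Y : E → Set F) (xb : E) (yb : F) (u : E) : Set F :=
  {h | ∃ (t : ℕ → ℝ) (u' : ℕ → E) (h' : ℕ → F),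
    (∀ k, 0 < t k) ∧ Tendsto t atTop (𝓝 0) ∧ Tendsto u' atTop (𝓝 u) ∧
    Tendsto h' atTop (𝓝 h) ∧ ∀ k, yb + t k • h' k ∈ Y (xb + t k • u' k)}

/-- Painlevé–Kuratowski inner limit of the difference quotients of a set-valued map. -/
def innerDeriv (Y : E → Set F) (xb : E) (yb : F) (u : E) : Set F :=
  {h | ∀ (t : ℕ → ℝ) (u' : ℕ → E), (∀ k, 0 < t k) → Tendsto t atTop (𝓝 0) →
    Tendsto u' atTop (𝓝 u) →
    ∃ h' : ℕ → F, Tendsto h' atTop (𝓝 h) ∧ ∀ k, yb + t k • h' k ∈ Y (xb + t k • u' k)}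

/-- `Y` is semidifferentiable at `xb` for `yb`: for every `u` the limit of the
difference quotient sets exists, i.e. outer and inner limits coincide. -/
def SetSemidiffAt (Y : E → Set F) (xb : E) (yb : F) : Prop :=
  ∀ u, graphDeriv Y xb yb u = innerDeriv Y xb yb u

/-- `Y` is calm around `(xb, yb)`. -/
def SetCalmAround (Y : E → Set F) (xb : E) (yb : F) : Prop :=
  ∃ l > (0 : ℝ), ∃ U ∈ 𝓝 xb, ∃ V ∈ 𝓝 yb, ∀ x ∈ U, ∀ y ∈ Y x ∩ V, ‖y - yb‖ ≤ l * ‖x - xb‖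

/-- `Y` is Lipschitz-like (Aubin property) around `(xb, yb)`. -/
def SetLipschitzLikeAround (Y : E → Set F) (xb : E) (yb : F) : Prop :=
  ∃ l > (0 : ℝ), ∃ U ∈ 𝓝 xb, ∃ V ∈ 𝓝 yb, ∀ x ∈ U, ∀ x' ∈ U, ∀ y ∈ Y x ∩ V,
    ∃ y' ∈ Y x', ‖y - y'‖ ≤ l * ‖x - x'‖

/-- Inner calmness of a set-valued map at `(xb, yb)` with respect to `X`. -/
def InnerCalmOn (Γ : E → Set F) (X : Set E) (xb : E) (yb : F) : Prop :=
  ∃ κ > (0 : ℝ), ∃ δ₀ > (0 : ℝ), ∀ x ∈ X ∩ closedBall xb δ₀,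
    ∃ y ∈ Γ x, ‖y - yb‖ ≤ κ * ‖x - xb‖

/-- Value of the (localized) maximization `max_{y ∈ A} f(x, y)`. -/
def maxVal (f : E × F → ℝ) (x : E) (A : Set F) : ℝ := sSup ((fun y => f (x, y)) '' A)

/-- Solution set of the maximization `max_{y ∈ A} f(x, y)`. -/
def argmaxSet (f : E × F → ℝ) (x : E) (A : Set F) : Set F :=
  {y ∈ A | ∀ y' ∈ A, f (x, y') ≤ f (x, y)}

/-- The defining inequalities of a local minimax point, for radius `δ₀` and radius
function `τ`. -/
def MinimaxIneq (f : E × F → ℝ) (X : Set E) (Y : E → Set F) (xb : E) (yb : F)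
    (δ₀ : ℝ) (τ : ℝ → ℝ) : Prop :=
  ∀ δ ∈ Ioc (0 : ℝ) δ₀, ∀ x ∈ X ∩ closedBall xb δ, ∀ y ∈ Y xb ∩ closedBall yb δ,
    f (xb, y) ≤ f (xb, yb) ∧ f (xb, yb) ≤ maxVal f x (Y x ∩ closedBall yb (τ δ))

/-- Local minimax point. -/
def IsLocalMinimaxPt (f : E × F → ℝ) (X : Set E) (Y : E → Set F) (xb : E) (yb : F) : Prop :=
  xb ∈ X ∧ yb ∈ Y xb ∧ ∃ δ₀ > (0 : ℝ), ∃ τ : ℝ → ℝ, (∀ δ, 0 ≤ τ δ) ∧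
    Tendsto τ (𝓝[>] (0 : ℝ)) (𝓝 0) ∧ MinimaxIneq f X Y xb yb δ₀ τ

/-- Calm local minimax point: a local minimax point whose radius function is calm at 0. -/
def IsCalmLocalMinimaxPt (f : E × F → ℝ) (X : Set E) (Y : E → Set F) (xb : E) (yb : F) : Prop :=
  xb ∈ X ∧ yb ∈ Y xb ∧ ∃ δ₀ > (0 : ℝ), ∃ τ : ℝ → ℝ, (∀ δ, 0 ≤ τ δ) ∧
    Tendsto τ (𝓝[>] (0 : ℝ)) (𝓝 0) ∧ (∃ κ > (0 : ℝ), ∀ δ ≥ (0 : ℝ), τ δ ≤ κ * δ) ∧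
    MinimaxIneq f X Y xb yb δ₀ τ

/-- Second-order growth condition at a (calm local) minimax point. -/
def SecondOrderGrowth (f : E × F → ℝ) (X : Set E) (Y : E → Set F) (xb : E) (yb : F) : Prop :=
  ∃ δ₀ > (0 : ℝ), ∃ ε > (0 : ℝ), ∃ μ > (0 : ℝ), ∃ κ > (0 : ℝ),
    ∀ x ∈ X ∩ closedBall xb δ₀, ∀ y ∈ Y xb ∩ closedBall yb δ₀,
      f (xb, y) + ε * ‖y - yb‖ ^ 2 ≤ f (xb, yb) ∧
      f (xb, yb) ≤ maxVal f x (Y x ∩ closedBall yb (κ * ‖x - xb‖)) - μ * ‖x - xb‖ ^ 2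

end Normed

section InnerP

variable {E F : Type*} [NormedAddCommGroup E] [InnerProductSpace ℝ E]
  [NormedAddCommGroup F] [InnerProductSpace ℝ F]

/-- Second subderivative of the indicator `δ_S` at `z` for a vector `v` and direction `w`. -/
def d2IndVec (S : Set E) (z v w : E) : EReal :=
  d2IndSub S (fun w' => ⟪v, w'⟫) z w

/-- Regular (Fréchet) normal cone, via polarity with the tangent cone. -/
def regNCone (S : Set E) (z : E) : Set E :=
  {v | ∀ w ∈ tCone S z, ⟪v, w⟫ ≤ 0}

/-- Limiting (Mordukhovich) normal cone. -/
def limNCone (S : Set E) (z : E) : Set E :=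
  {v | ∃ (zk : ℕ → E) (vk : ℕ → E), (∀ k, zk k ∈ S) ∧ Tendsto zk atTop (𝓝 z) ∧
    Tendsto vk atTop (𝓝 v) ∧ ∀ k, vk k ∈ regNCone S (zk k)}

/-- Normal cone of convex analysis. -/
def convNCone (D : Set E) (d : E) : Set E :=
  {v | ∀ z ∈ D, ⟪v, z - d⟫ ≤ 0}

/-- The inner product on a product of inner product spaces (ℓ²-pairing). -/
def pairInner (a b : E × F) : ℝ := ⟪a.1, b.1⟫ + ⟪a.2, b.2⟫

/-- Regular (Fréchet) normal cone for subsets of a product space. -/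
def regNConeP (S : Set (E × F)) (z : E × F) : Set (E × F) :=
  {v | ∀ w ∈ tCone S z, pairInner v w ≤ 0}

/-- Limiting normal cone for subsets of a product space. -/
def limNConeP (S : Set (E × F)) (z : E × F) : Set (E × F) :=
  {v | ∃ (zk : ℕ → E × F) (vk : ℕ → E × F), (∀ k, zk k ∈ S) ∧ Tendsto zk atTop (𝓝 z) ∧
    Tendsto vk atTop (𝓝 v) ∧ ∀ k, vk k ∈ regNConeP S (zk k)}

end InnerP

/-- Graph of a set-valued map. -/
def gphSet {E F : Type*} (Y : E → Set F) : Set (E × F) := {p : E × F | p.2 ∈ Y p.1}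

/-! Write `C p` for the set of difference quotients of `Y`, cut down to a ball, at `p = (t, u')`.
Scaling the constraint `y = yb + t h` turns the difference quotient of the value function into the
supremum over `h ∈ C p` of the difference quotients of `f` at `(t, (u', h))`. As `p → (0, u)`,
the objectives converge continuously to the semiderivative of `f`, while by calmness the feasible
sets `C p` stay in a fixed compact set and converge in the sense of Painlevé–Kuratowski to the
graphical derivative. Suprema of continuously converging functions over such sets converge to the
maximum of the limit problem. -/

section SetLimits

variable {ι X : Type*} [TopologicalSpace X] {l : Filter ι} {C D : ι → Set X}

/-- Painlevé–Kuratowski outer limit of the sets `C i` along `l`: the points all of whose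
neighbourhoods meet `C i` frequently. -/
def outerLimit (l : Filter ι) (C : ι → Set X) : Set X :=
  {x | ∃ᶠ p in l ×ˢ 𝓝 x, p.2 ∈ C p.1}

/-- Painlevé–Kuratowski inner limit of the sets `C i` along `l`: the points all of whose
neighbourhoods meet `C i` eventually. -/
def innerLimit (l : Filter ι) (C : ι → Set X) : Set X :=
  {x | ∀ N ∈ 𝓝 x, ∀ᶠ i in l, (C i ∩ N).Nonempty}

theorem outerLimit_subset_of_eventually
    (h : ∀ x, ∀ᶠ p in l ×ˢ 𝓝 x, p.2 ∈ C p.1 → p.2 ∈ D p.1) :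
    outerLimit l C ⊆ outerLimit l D :=
  fun x hx => Frequently.mp hx (h x)

theorem eventually_exists_of_mem_innerLimit {x : X} (hx : x ∈ innerLimit l C) {P : ι × X → Prop}
    (hP : ∀ᶠ p in l ×ˢ 𝓝 x, P p) : ∀ᶠ i in l, ∃ y ∈ C i, P (i, y) := by
  obtain ⟨s, hs, T, hT, hsT⟩ := mem_prod_iff.1 hP
  filter_upwards [hx T hT, hs] with i ⟨y, hyC, hyT⟩ hi
  exact ⟨y, hyC, hsT (mk_mem_prod hi hyT)⟩

theorem innerLimit_subset_of_eventually
    (h : ∀ x, ∀ᶠ p in l ×ˢ 𝓝 x, p.2 ∈ C p.1 → p.2 ∈ D p.1) :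
    innerLimit l C ⊆ innerLimit l D := by
  intro x hx N hN
  have hN' : ∀ᶠ p in l ×ˢ 𝓝 x, p.2 ∈ N := Eventually.prod_inr hN l
  filter_upwards [eventually_exists_of_mem_innerLimit hx ((h x).and hN')]
    with i ⟨y, hyC, hCD, hyN⟩
  exact ⟨y, hCD hyC, hyN⟩

theorem eventually_nhds_eventually_prod_nhds {x : X} {P : ι × X → Prop}
    (h : ∀ᶠ p in l ×ˢ 𝓝 x, P p) : ∀ᶠ y in 𝓝 x, ∀ᶠ p in l ×ˢ 𝓝 y, P p := by
  obtain ⟨s, hs, T, hT, hsT⟩ := mem_prod_iff.1 h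
  filter_upwards [eventually_mem_nhds_iff.2 hT] with y hy
  exact mem_of_superset (prod_mem_prod hs hy) hsT

theorem isClosed_outerLimit : IsClosed (outerLimit l C) := by
  rw [← isOpen_compl_iff, isOpen_iff_eventually]
  intro x hx
  filter_upwards [eventually_nhds_eventually_prod_nhds (not_frequently.1 hx)] with y hy
  exact not_frequently.2 hy

theorem outerLimit_subset_of_isClosed {K : Set X} (hK : IsClosed K) (hCK : ∀ᶠ i in l, C i ⊆ K) :
    outerLimit l C ⊆ K := by
  intro x hx
  by_contra hxK
  refine hx ?_
  filter_upwards [hCK.prod_mk (hK.isOpen_compl.mem_nhds hxK)] with p ⟨hpK, hp⟩ hpC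
  exact hp (hpK hpC)

theorem continuous_of_tendsto_prod_nhds {Z : Type*} [TopologicalSpace Z] [RegularSpace Z]
    [l.NeBot] {φ : ι → X → Z} {g : X → Z}
    (hφ : ∀ x, Tendsto (fun p : ι × X => φ p.1 p.2) (l ×ˢ 𝓝 x) (𝓝 (g x))) :
    Continuous g := by
  refine continuous_iff_continuousAt.2 fun x => (closed_nhds_basis (g x)).tendsto_right_iff.2 ?_
  rintro W ⟨hW, hWclosed⟩
  filter_upwards [eventually_nhds_eventually_prod_nhds ((hφ x).eventually hW)] with y hy
  exact hWclosed.mem_of_tendsto (hφ y) hy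

theorem eventually_forall_of_isCompact {K : Set X} (hK : IsCompact K)
    {P : ι × X → Prop} (h : ∀ x ∈ K, ∀ᶠ p in l ×ˢ 𝓝 x, P p) :
    ∀ᶠ i in l, ∀ x ∈ K, P (i, x) := by
  have hK' : ∀ᶠ p in l ×ˢ 𝓝ˢ K, P p := by
    simpa only [hK.prod_nhdsSet_eq_biSup, eventually_iSup] using h
  exact hK'.curry.mono fun _ hi => hi.self_of_nhdsSet

variable {φ : ι → X → ℝ} {g : X → ℝ} {K : Set X}

theorem eventually_bddAbove_image_of_isCompact [l.NeBot] (hK : IsCompact K)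
    (hCK : ∀ᶠ i in l, C i ⊆ K)
    (hφ : ∀ x, Tendsto (fun p : ι × X => φ p.1 p.2) (l ×ˢ 𝓝 x) (𝓝 (g x))) :
    ∀ᶠ i in l, BddAbove (φ i '' C i) := by
  obtain ⟨M, hM⟩ := hK.bddAbove_image (continuous_of_tendsto_prod_nhds hφ).continuousOn
  have hlt : ∀ x ∈ K, ∀ᶠ p in l ×ˢ 𝓝 x, φ p.1 p.2 < M + 1 := fun x hx =>
    (hφ x).eventually_lt_const ((hM (mem_image_of_mem g hx)).trans_lt (lt_add_one M))
  filter_upwards [hCK, eventually_forall_of_isCompact hK hlt] with i hiK hi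
  exact ⟨M + 1, forall_mem_image.2 fun x hx => (hi x (hiK hx)).le⟩

theorem eventually_forall_lt_of_forall_outerLimit_lt (hK : IsCompact K)
    (hCK : ∀ᶠ i in l, C i ⊆ K)
    (hφ : ∀ x, Tendsto (fun p : ι × X => φ p.1 p.2) (l ×ˢ 𝓝 x) (𝓝 (g x))) {c : ℝ}
    (hc : ∀ x ∈ outerLimit l C, g x < c) : ∀ᶠ i in l, ∀ x ∈ C i, φ i x < c := by
  have hlocal : ∀ x ∈ K, ∀ᶠ p in l ×ˢ 𝓝 x, p.2 ∈ C p.1 → φ p.1 p.2 < c := by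
    intro x _
    by_cases hx : x ∈ outerLimit l C
    · filter_upwards [(hφ x).eventually_lt_const (hc x hx)] with p hp _ using hp
    · filter_upwards [not_frequently.1 hx] with p hp hpC using absurd hpC hp
  filter_upwards [hCK, eventually_forall_of_isCompact hK hlocal] with i hiK hi x hx
  exact hi x (hiK hx) hx

theorem outerLimit_nonempty_of_isCompact [l.NeBot] (hK : IsCompact K) (hCK : ∀ᶠ i in l, C i ⊆ K)
    (hne : ∀ᶠ i in l, (C i).Nonempty) : (outerLimit l C).Nonempty := by
  by_contra hempty
  have hnot : ∀ x ∈ K, ∀ᶠ p in l ×ˢ 𝓝 x, p.2 ∉ C p.1 := fun x _ =>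
    not_frequently.1 fun hx => hempty ⟨x, hx⟩
  obtain ⟨i, hiK, ⟨x, hx⟩, hi⟩ :=
    (hCK.and (hne.and (eventually_forall_of_isCompact hK hnot))).exists
  exact hi x (hiK hx) hx

theorem exists_isMaxOn_tendsto_sSup_image [l.NeBot] [T2Space X] (hK : IsCompact K)
    (hCK : ∀ᶠ i in l, C i ⊆ K) (hne : ∀ᶠ i in l, (C i).Nonempty)
    (hC : outerLimit l C ⊆ innerLimit l C)
    (hφ : ∀ x, Tendsto (fun p : ι × X => φ p.1 p.2) (l ×ˢ 𝓝 x) (𝓝 (g x))) :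
    ∃ x ∈ outerLimit l C, IsMaxOn g (outerLimit l C) x ∧
      Tendsto (fun i => sSup (φ i '' C i)) l (𝓝 (g x)) := by
  have hcompact : IsCompact (outerLimit l C) :=
    hK.of_isClosed_subset isClosed_outerLimit (outerLimit_subset_of_isClosed hK.isClosed hCK)
  obtain ⟨x, hx, hmax⟩ := hcompact.exists_isMaxOn
    (outerLimit_nonempty_of_isCompact hK hCK hne) (continuous_of_tendsto_prod_nhds hφ).continuousOn
  refine ⟨x, hx, hmax, tendsto_order.2 ⟨fun a ha => ?_, fun b hb => ?_⟩⟩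
  · filter_upwards [eventually_bddAbove_image_of_isCompact hK hCK hφ,
      eventually_exists_of_mem_innerLimit (hC hx) ((hφ x).eventually_const_lt ha)]
      with i hbdd ⟨y, hy, hay⟩
    exact hay.trans_le (le_csSup hbdd (mem_image_of_mem _ hy))
  · obtain ⟨c, hxc, hcb⟩ := exists_between hb
    filter_upwards [hne, eventually_forall_lt_of_forall_outerLimit_lt hK hCK hφ
      fun y hy => (hmax hy).trans_lt hxc] with i hi hlt
    exact (csSup_le (hi.image _) (forall_mem_image.2 fun y hy => (hlt y hy).le)).trans_lt hcb

end SetLimits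

section QuotFilter

variable {E F : Type*} [TopologicalSpace E] [TopologicalSpace F] {u : E}

instance quotFilter_neBot (u : E) : (quotFilter u).NeBot := by
  unfold quotFilter; infer_instance

instance quotFilter_isCountablyGenerated [FirstCountableTopology E] (u : E) :
    (quotFilter u).IsCountablyGenerated := by
  unfold quotFilter; infer_instance

theorem tendsto_quotFilter_iff {ι : Type*} {l : Filter ι} {p : ι → ℝ × E} :
    Tendsto p l (quotFilter u) ↔ Tendsto (fun i => (p i).1) l (𝓝 0) ∧
      (∀ᶠ i in l, 0 < (p i).1) ∧ Tendsto (fun i => (p i).2) l (𝓝 u) := by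
  rw [quotFilter, tendsto_prod_iff', tendsto_nhdsWithin_iff, and_assoc]
  rfl

theorem tendsto_fst_quotFilter (u : E) :
    Tendsto (fun p : ℝ × E => p.1) (quotFilter u) (𝓝 0) :=
  (tendsto_quotFilter_iff.1 tendsto_id).1

theorem eventually_quotFilter_fst_pos (u : E) : ∀ᶠ p in quotFilter u, 0 < p.1 :=
  (tendsto_quotFilter_iff.1 tendsto_id).2.1

theorem tendsto_snd_quotFilter (u : E) :
    Tendsto (fun p : ℝ × E => p.2) (quotFilter u) (𝓝 u) :=
  (tendsto_quotFilter_iff.1 tendsto_id).2.2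

theorem tendsto_quotFilter_prod_assoc (u : E) (h : F) :
    Tendsto (fun q : (ℝ × E) × F => (q.1.1, (q.1.2, q.2))) (quotFilter u ×ˢ 𝓝 h)
      (quotFilter (u, h)) := by
  rw [quotFilter, quotFilter, nhds_prod_eq]
  exact tendsto_prodAssoc

variable [AddCommMonoid E] [Module ℝ E] [ContinuousSMul ℝ E]

theorem tendsto_add_smul_quotFilter [ContinuousAdd E] (z u : E) :
    Tendsto (fun p : ℝ × E => z + p.1 • p.2) (quotFilter u) (𝓝 z) := by
  simpa using tendsto_const_nhds.add ((tendsto_fst_quotFilter u).smul (tendsto_snd_quotFilter u))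

theorem tendsto_sqrt_smul_quotFilter (u : E) :
    Tendsto (fun p : ℝ × E => (√p.1, √p.1 • p.2)) (quotFilter u) (quotFilter 0) := by
  have hsqrt : Tendsto (fun p : ℝ × E => √p.1) (quotFilter u) (𝓝 0) := by
    simpa using (tendsto_fst_quotFilter u).sqrt
  refine tendsto_quotFilter_iff.2 ⟨hsqrt, ?_, ?_⟩
  · exact (eventually_quotFilter_fst_pos u).mono fun p => Real.sqrt_pos.2
  · simpa using hsqrt.smul (tendsto_snd_quotFilter u)

end QuotFilter

section DiffQuot

variable {E F : Type*} [NormedAddCommGroup E] [NormedSpace ℝ E]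
  [NormedAddCommGroup F] [NormedSpace ℝ F]

/-- The difference quotient `(ψ(z + tw) - ψ(z))/t` of a function, at `p = (t, w)`; its limits along
`quotFilter w` are the semiderivatives of `ψ`. -/
def diffQuot (ψ : E → ℝ) (z : E) (p : ℝ × E) : ℝ := (ψ (z + p.1 • p.2) - ψ z) / p.1

/-- The difference quotient `(Y(xb + tu') - yb)/t` of a set-valued map, at `p = (t, u')`. It is
written as a preimage, so that it means the intended set only for `t ≠ 0`. -/
def diffQuotSet (Y : E → Set F) (xb : E) (yb : F) (p : ℝ × E) : Set F :=
  (fun h => yb + p.1 • h) ⁻¹' Y (xb + p.1 • p.2)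

theorem dsub_eq_of_tendsto_diffQuot {ψ : E → ℝ} {z w : E} {L : ℝ}
    (h : Tendsto (diffQuot ψ z) (quotFilter w) (𝓝 L)) : dsub ψ z w = (L : EReal) :=
  ((continuous_coe_real_ereal.tendsto L).comp h).liminf_eq

variable {Y Z : E → Set F} {xb : E} {yb : F}

theorem image_diffQuotSet (Y : E → Set F) (xb : E) (yb : F) {p : ℝ × E} (hp : p.1 ≠ 0) :
    (fun h => yb + p.1 • h) '' diffQuotSet Y xb yb p = Y (xb + p.1 • p.2) :=
  image_preimage_eq _ ((add_left_surjective yb).comp (MulAction.surjective₀ hp))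

theorem diffQuotSet_nonempty_iff {p : ℝ × E} (hp : p.1 ≠ 0) :
    (diffQuotSet Y xb yb p).Nonempty ↔ (Y (xb + p.1 • p.2)).Nonempty := by
  rw [← image_diffQuotSet Y xb yb hp, image_nonempty]

theorem graphDeriv_eq_outerLimit (Y : E → Set F) (xb : E) (yb : F) (u : E) :
    graphDeriv Y xb yb u = outerLimit (quotFilter u) (diffQuotSet Y xb yb) := by
  ext h
  constructor
  · rintro ⟨t, u', h', ht, ht0, hu', hh', hmem⟩
    have hlim : Tendsto (fun k => ((t k, u' k), h' k)) atTop (quotFilter u ×ˢ 𝓝 h) :=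
      (tendsto_quotFilter_iff.2 ⟨ht0, .of_forall ht, hu'⟩).prodMk hh'
    exact hlim.frequently (Frequently.of_forall hmem)
  · intro hh
    obtain ⟨q, hq, hmem⟩ := exists_seq_forall_of_frequently
      (hh.and_eventually ((eventually_quotFilter_fst_pos u).prod_inl (𝓝 h)))
    obtain ⟨hq0, -, hqu⟩ := tendsto_quotFilter_iff.1 (tendsto_fst.comp hq)
    exact ⟨fun k => (q k).1.1, fun k => (q k).1.2, fun k => (q k).2, fun k => (hmem k).2,
      hq0, hqu, tendsto_snd.comp hq, fun k => (hmem k).1⟩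

-- The inclusion can be strict: `innerDeriv` asks for membership along the whole sequence, so it is
-- empty as soon as some value of `Y` is, even far from `xb`.
theorem innerDeriv_subset_innerLimit (Y : E → Set F) (xb : E) (yb : F) (u : E) :
    innerDeriv Y xb yb u ⊆ innerLimit (quotFilter u) (diffQuotSet Y xb yb) := by
  intro h hh N hN
  by_contra hcon
  obtain ⟨p, hp, hmiss⟩ := exists_seq_forall_of_frequently
    ((not_eventually.1 hcon).and_eventually (eventually_quotFilter_fst_pos u))
  obtain ⟨hp0, -, hpu⟩ := tendsto_quotFilter_iff.1 hp
  obtain ⟨h', hh', hmem⟩ := hh _ _ (fun k => (hmiss k).2) hp0 hpu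
  obtain ⟨k, hk⟩ := (hh'.eventually_mem hN).exists
  exact (hmiss k).1 ⟨h' k, hmem k, hk⟩

theorem zero_mem_graphDeriv_zero (hyb : yb ∈ Y xb) : (0 : F) ∈ graphDeriv Y xb yb 0 :=
  ⟨fun k => 1 / ((k : ℝ) + 1), fun _ => 0, fun _ => 0, fun _ => Nat.one_div_pos_of_nat,
    tendsto_one_div_add_atTop_nhds_zero_nat, tendsto_const_nhds, tendsto_const_nhds,
    fun _ => by simpa using hyb⟩

theorem eventually_mem_diffQuotSet_imp (h : ∀ᶠ z in 𝓝 (xb, yb), z.2 ∈ Y z.1 → z.2 ∈ Z z.1)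
    (u : E) (v : F) :
    ∀ᶠ q in quotFilter u ×ˢ 𝓝 v,
      q.2 ∈ diffQuotSet Y xb yb q.1 → q.2 ∈ diffQuotSet Z xb yb q.1 :=
  ((tendsto_add_smul_quotFilter (xb, yb) (u, v)).comp
    (tendsto_quotFilter_prod_assoc u v)).eventually h

-- The reparametrization `t u' = √t • (√t u')` turns every direction into the direction `0`.
theorem eventually_diffQuotSet_nonempty
    (h : (innerLimit (quotFilter 0) (diffQuotSet Y xb yb)).Nonempty) (u : E) :
    ∀ᶠ p in quotFilter u, (diffQuotSet Y xb yb p).Nonempty := by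
  obtain ⟨v, hv⟩ := h
  filter_upwards [(tendsto_sqrt_smul_quotFilter u).eventually (hv univ univ_mem),
    eventually_quotFilter_fst_pos u] with p hp ht
  rw [inter_univ, diffQuotSet_nonempty_iff (Real.sqrt_pos.2 ht).ne', smul_smul,
    Real.mul_self_sqrt ht.le] at hp
  exact (diffQuotSet_nonempty_iff ht.ne').2 hp

theorem diffQuotSet_subset_closedBall {κ : ℝ} (hY : ∀ x, Y x ⊆ closedBall yb (κ * ‖x - xb‖))
    {p : ℝ × E} (hp : 0 < p.1) :
    diffQuotSet Y xb yb p ⊆ closedBall 0 (κ * ‖p.2‖) := by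
  intro h hh
  have hle := mem_closedBall_iff_norm.1 (hY _ hh)
  rw [add_sub_cancel_left, add_sub_cancel_left, norm_smul, norm_smul, mul_left_comm] at hle
  exact mem_closedBall_zero_iff.2 (le_of_mul_le_mul_left hle (norm_pos_iff.2 hp.ne'))

theorem eventually_diffQuotSet_subset_closedBall {κ : ℝ}
    (hY : ∀ x, Y x ⊆ closedBall yb (κ * ‖x - xb‖)) (u : E) :
    ∀ᶠ p in quotFilter u, diffQuotSet Y xb yb p ⊆ closedBall 0 (κ * ‖u‖ + 1) := by
  have hnorm : ∀ᶠ p in quotFilter u, κ * ‖p.2‖ < κ * ‖u‖ + 1 :=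
    ((tendsto_snd_quotFilter u).norm.const_mul κ).eventually_lt_const (lt_add_one _)
  filter_upwards [hnorm, eventually_quotFilter_fst_pos u] with p hlt ht
  exact (diffQuotSet_subset_closedBall hY ht).trans (closedBall_subset_closedBall hlt.le)

end DiffQuot

section ValueFunction

variable {E F : Type*} [NormedAddCommGroup E] [NormedAddCommGroup F]
  {f : E × F → ℝ} {Y : E → Set F} {xb : E} {yb : F} {κ : ℝ}

/-- The feasible set `Y(x) ∩ 𝔹_{κ‖x-xb‖}(yb)` of the localized maximization problem. -/
def localSlice (Y : E → Set F) (xb : E) (yb : F) (κ : ℝ) (x : E) : Set F :=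
  Y x ∩ closedBall yb (κ * ‖x - xb‖)

theorem SetCalmAround.exists_eventually_mem_localSlice (hY : SetCalmAround Y xb yb) :
    ∃ κ₀ > 0, ∀ κ ≥ κ₀, ∀ᶠ z in 𝓝 (xb, yb), z.2 ∈ Y z.1 → z.2 ∈ localSlice Y xb yb κ z.1 := by
  obtain ⟨κ₀, hκ₀, U, hU, V, hV, hcalm⟩ := hY
  refine ⟨κ₀, hκ₀, fun κ hκ => ?_⟩
  filter_upwards [prod_mem_nhds hU hV] with z ⟨hzU, hzV⟩ hz
  refine ⟨hz, mem_closedBall_iff_norm.2 ((hcalm _ hzU _ ⟨hz, hzV⟩).trans ?_)⟩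
  gcongr

theorem maxVal_self_of_subset_closedBall (hyb : yb ∈ Y xb)
    (hY : ∀ x, Y x ⊆ closedBall yb (κ * ‖x - xb‖)) : maxVal f xb (Y xb) = f (xb, yb) := by
  have hsub : Y xb ⊆ {yb} := by simpa using hY xb
  rw [hsub.antisymm (singleton_subset_iff.2 hyb), maxVal, image_singleton, csSup_singleton]

variable [NormedSpace ℝ E] [NormedSpace ℝ F]

theorem diffQuot_maxVal_eq_sSup (hself : maxVal f xb (Y xb) = f (xb, yb)) {p : ℝ × E}
    (hp : 0 < p.1) (hne : (diffQuotSet Y xb yb p).Nonempty)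
    (hbdd : BddAbove ((fun h => diffQuot f (xb, yb) (p.1, (p.2, h))) '' diffQuotSet Y xb yb p)) :
    diffQuot (fun x => maxVal f x (Y x)) xb p =
      sSup ((fun h => diffQuot f (xb, yb) (p.1, (p.2, h))) '' diffQuotSet Y xb yb p) := by
  let e : ℝ ≃o ℝ := (OrderIso.addRight (-f (xb, yb))).trans (OrderIso.divRight₀ p.1 hp)
  have he : ∀ a, e a = (a - f (xb, yb)) / p.1 := fun a => by simp [e, sub_eq_add_neg]
  have himage : (fun h => diffQuot f (xb, yb) (p.1, (p.2, h))) '' diffQuotSet Y xb yb p =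
      e '' ((fun y => f (xb + p.1 • p.2, y)) '' Y (xb + p.1 • p.2)) := by
    rw [← image_diffQuotSet Y xb yb hp.ne', image_image, image_image]
    exact image_congr fun h _ => (he _).symm
  rw [himage] at hbdd ⊢
  have hne' : (Y (xb + p.1 • p.2)).Nonempty := (diffQuotSet_nonempty_iff hp.ne').1 hne
  rw [← e.map_csSup' (hne'.image _) (e.bddAbove_image.1 hbdd), he, diffQuot, hself]
  rfl

theorem exists_isMaxOn_tendsto_diffQuot_maxVal [ProperSpace F] {u : E} {g : F → ℝ}
    (hyb : yb ∈ Y xb) (hY : ∀ x, Y x ⊆ closedBall yb (κ * ‖x - xb‖))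
    (hne : ∀ᶠ p in quotFilter u, (diffQuotSet Y xb yb p).Nonempty)
    (hsemi : graphDeriv Y xb yb u ⊆ innerLimit (quotFilter u) (diffQuotSet Y xb yb))
    (hg : ∀ h, Tendsto (diffQuot f (xb, yb)) (quotFilter (u, h)) (𝓝 (g h))) :
    ∃ h ∈ graphDeriv Y xb yb u, IsMaxOn g (graphDeriv Y xb yb u) h ∧
      Tendsto (diffQuot (fun x => maxVal f x (Y x)) xb) (quotFilter u) (𝓝 (g h)) := by
  rw [graphDeriv_eq_outerLimit] at hsemi ⊢
  have hK := isCompact_closedBall (0 : F) (κ * ‖u‖ + 1)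
  have hCK := eventually_diffQuotSet_subset_closedBall hY u
  let φ : ℝ × E → F → ℝ := fun p h => diffQuot f (xb, yb) (p.1, (p.2, h))
  have hφ : ∀ h, Tendsto (fun q : (ℝ × E) × F => φ q.1 q.2) (quotFilter u ×ˢ 𝓝 h) (𝓝 (g h)) :=
    fun h => (hg h).comp (tendsto_quotFilter_prod_assoc u h)
  obtain ⟨h, hh, hmax, hlim⟩ := exists_isMaxOn_tendsto_sSup_image hK hCK hne hsemi hφ
  refine ⟨h, hh, hmax, hlim.congr' ?_⟩
  have hbdd := eventually_bddAbove_image_of_isCompact (φ := φ) hK hCK hφ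
  filter_upwards [eventually_quotFilter_fst_pos u, hne, hbdd] with p hp hpne hpbdd
  exact (diffQuot_maxVal_eq_sSup (maxVal_self_of_subset_closedBall hyb hY) hp hpne hpbdd).symm

theorem graphDeriv_localSlice
    (h : ∀ᶠ z in 𝓝 (xb, yb), z.2 ∈ Y z.1 → z.2 ∈ localSlice Y xb yb κ z.1) (u : E) :
    graphDeriv (localSlice Y xb yb κ) xb yb u = graphDeriv Y xb yb u := by
  simp only [graphDeriv_eq_outerLimit]
  refine Subset.antisymm (outerLimit_subset_of_eventually fun v => ?_)
    (outerLimit_subset_of_eventually (eventually_mem_diffQuotSet_imp h u))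
  exact .of_forall fun q hq => hq.1

theorem exists_isMaxOn_tendsto_diffQuot_localSlice [ProperSpace F] {u : E} {g : F → ℝ}
    (hyb : yb ∈ Y xb)
    (hsemi : ∀ u, graphDeriv Y xb yb u ⊆ innerLimit (quotFilter u) (diffQuotSet Y xb yb))
    (hκ : ∀ᶠ z in 𝓝 (xb, yb), z.2 ∈ Y z.1 → z.2 ∈ localSlice Y xb yb κ z.1)
    (hg : ∀ h, Tendsto (diffQuot f (xb, yb)) (quotFilter (u, h)) (𝓝 (g h))) :
    ∃ h ∈ graphDeriv Y xb yb u, IsMaxOn g (graphDeriv Y xb yb u) h ∧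
      Tendsto (diffQuot (fun x => maxVal f x (localSlice Y xb yb κ x)) xb) (quotFilter u)
        (𝓝 (g h)) := by
  have hinner : ∀ v, graphDeriv Y xb yb v ⊆
      innerLimit (quotFilter v) (diffQuotSet (localSlice Y xb yb κ) xb yb) := fun v =>
    (hsemi v).trans (innerLimit_subset_of_eventually (eventually_mem_diffQuotSet_imp hκ v))
  rw [← graphDeriv_localSlice hκ u]
  refine exists_isMaxOn_tendsto_diffQuot_maxVal (hκ.self_of_nhds hyb) (fun _ => inter_subset_right)
    (eventually_diffQuotSet_nonempty ⟨0, hinner 0 (zero_mem_graphDeriv_zero hyb)⟩ u) ?_ hg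
  rw [graphDeriv_localSlice hκ u]
  exact hinner u

theorem value_function_semidifferentiable_general [ProperSpace F]
    (hyb : yb ∈ Y xb) (hf : SemidiffAt f (xb, yb))
    (hsemi : ∀ u, graphDeriv Y xb yb u ⊆ innerLimit (quotFilter u) (diffQuotSet Y xb yb))
    (hcalm : SetCalmAround Y xb yb) :
    ∃ κ₀ > (0 : ℝ), ∀ κ ≥ κ₀,
      SemidiffAt (fun x => maxVal f x (Y x ∩ closedBall yb (κ * ‖x - xb‖))) xb ∧
      ∀ u : E, ∃ h ∈ graphDeriv Y xb yb u,
        dsub (fun x => maxVal f x (Y x ∩ closedBall yb (κ * ‖x - xb‖))) xb u =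
          dsub f (xb, yb) (u, h) ∧
        ∀ h' ∈ graphDeriv Y xb yb u, dsub f (xb, yb) (u, h') ≤ dsub f (xb, yb) (u, h) := by
  choose g hg using hf
  have hdsub : ∀ w, dsub f (xb, yb) w = g w := fun w => dsub_eq_of_tendsto_diffQuot (hg w)
  obtain ⟨κ₀, hκ₀, hloc⟩ := hcalm.exists_eventually_mem_localSlice
  refine ⟨κ₀, hκ₀, fun κ hκ => ?_⟩
  have hmax u := exists_isMaxOn_tendsto_diffQuot_localSlice hyb hsemi (hloc κ hκ)
    (g := fun h => g (u, h)) fun h => hg (u, h)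
  refine ⟨fun u => ?_, fun u => ?_⟩ <;> obtain ⟨h, hh, hle, hlim⟩ := hmax u
  · exact ⟨_, hlim⟩
  · refine ⟨h, hh, (dsub_eq_of_tendsto_diffQuot hlim).trans (hdsub _).symm, fun h' hh' => ?_⟩
    rw [hdsub, hdsub]
    exact EReal.coe_le_coe (hle hh')

end ValueFunction

/-- If `f` is semidifferentiable at `(xb, yb)` and `Y` is
semidifferentiable at `xb` for `yb` and calm around `(xb, yb)`, then there exists
`κ > 0` such that the localized value function
`V_τ(x) = max_{y' ∈ Y(x) ∩ 𝔹_{κ‖x-xb‖}(yb)} f(x, y')` is semidifferentiable at `xb`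
and `V_τ'(xb; u) = max_{h ∈ DY(xb,yb)(u)} df(xb,yb)(u,h)` with the maximum attained. -/
theorem value_function_semidifferentiable
    {n m : ℕ} (f : Eu n × Eu m → ℝ) (Y : Eu n → Set (Eu m))
    (xb : Eu n) (yb : Eu m) (hyb : yb ∈ Y xb) (hY : ∀ x, IsClosed (Y x))
    (hf : SemidiffAt f (xb, yb))
    (hsemi : SetSemidiffAt Y xb yb) (hcalm : SetCalmAround Y xb yb) :
    ∃ κ > (0 : ℝ),
      SemidiffAt (fun x => maxVal f x (Y x ∩ closedBall yb (κ * ‖x - xb‖))) xb ∧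
      ∀ u : Eu n, ∃ h ∈ graphDeriv Y xb yb u,
        dsub (fun x => maxVal f x (Y x ∩ closedBall yb (κ * ‖x - xb‖))) xb u =
          dsub f (xb, yb) (u, h) ∧
        ∀ h' ∈ graphDeriv Y xb yb u, dsub f (xb, yb) (u, h') ≤ dsub f (xb, yb) (u, h) := by
  obtain ⟨κ, hκ, hmax⟩ := value_function_semidifferentiable_general hyb hf
    (fun u => (hsemi u).subset.trans (innerDeriv_subset_innerLimit Y xb yb u)) hcalm
  exact ⟨κ, hκ, hmax κ le_rfl⟩
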